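/- Let R be a commutative ring such that the maximal spectrum Specm(R) (the subspace of Spec(R) consisting of maximal ideals) is a noetherian topological space and can be written as a union of finitely many subspaces X₁, …, X_N each of topological Krull dimension at most d. Then for every r ≥ d + 2 the elementary group E_r(R) acts transitively on the set of unimodular rows of length r: for every unimodular row (a₁,…,a_r) ∈ Rʳ there exists ε ∈ E_r(R) such that (a₁,…,a_r)·ε = (1,0,…,0). -/

import Mathlib

open Matrix

/-- The elementary subgroup `E_r(R) ⊆ SL_r(R)`: the subgroup generated by the elementary
matrices `e_{ij}(a) = 1 + a·E_{ij}` for `i ≠ j` and `a ∈ R`. -/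
def elementarySubgroup (r : ℕ) (R : Type*) [CommRing R] :
    Subgroup (SpecialLinearGroup (Fin r) R) :=
  Subgroup.closure {σ | ∃ (i j : Fin r) (a : R), i ≠ j ∧
    (σ : Matrix (Fin r) (Fin r) R) = Matrix.transvection i j a}

/-!
Fix `s` and work over the locus `s ∉ m` of `Specm R`. Choose a point on every irreducible component
of every piece of the cover; by the Chinese remainder theorem some `a₀ + s * b₀` vanishes at none of
these points, so its zero locus meets each piece in strictly smaller dimension. Repeating this with
`a₁, a₂, …` shows that `d + 1` entries suffice to leave no common zero: a unimodular row
`(s, a₀, …, a_d, …)` can be shortened to the unimodular row `a + s • b`. A combination of the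
shortened row then turns the first entry into `1`, which clears all the others.
-/

open Function Set Topology TopologicalSpace

section KrullDim

theorem krullDim_add_one_le_of_strictMono {α β : Type*} [Preorder α] [Preorder β] {f : α → β}
    (hf : StrictMono f) (h : ∀ a, ∃ b, f a < b) :
    Order.krullDim α + 1 ≤ Order.krullDim β := by
  cases isEmpty_or_nonempty α
  · simp only [Order.krullDim_eq_bot, WithBot.bot_add, bot_le]
  rw [Order.krullDim_eq_iSup_height_of_nonempty, ← WithBot.coe_one, ← WithBot.coe_add,
    ENat.iSup_add]
  obtain ⟨b₀, -⟩ := h (Classical.arbitrary α)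
  have : Nonempty β := ⟨b₀⟩
  rw [Order.krullDim_eq_iSup_height_of_nonempty, WithBot.coe_le_coe]
  refine iSup_le fun a => ?_
  obtain ⟨b, hb⟩ := h a
  calc Order.height a + 1
      ≤ Order.height (f a) + 1 := by gcongr; exact Order.height_le_height_apply_of_strictMono f hf a
    _ ≤ Order.height b := Order.height_add_one_le hb
    _ ≤ ⨆ b, Order.height b := le_iSup Order.height b

variable {X Y Z : Type*} [TopologicalSpace X] [TopologicalSpace Y] [TopologicalSpace Z]

theorem topologicalKrullDim_add_one_le_of_isInducing {f : Z → Y} (hf : IsInducing f)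
    (h : ∀ C ∈ irreducibleComponents Y, ¬C ⊆ closure (range f)) :
    topologicalKrullDim Z + 1 ≤ topologicalKrullDim Y := by
  refine krullDim_add_one_le_of_strictMono (IrreducibleCloseds.map_strictMono_of_isInducing hf)
    fun D => ?_
  obtain ⟨C, hC, hDC⟩ := exists_mem_irreducibleComponents_subset_of_isIrreducible _
    (IrreducibleCloseds.map f hf.continuous D).isIrreducible
  refine ⟨⟨C, hC.1, isClosed_of_mem_irreducibleComponents C hC⟩,
    lt_of_le_not_ge hDC fun hCD => h C hC (Subset.trans hCD ?_)⟩
  rw [IrreducibleCloseds.coe_map]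
  exact closure_mono (image_subset_range f D)

theorem exists_finite_forall_isClosed_topologicalKrullDim_inter_add_one_le (Y : Set X)
    [NoetherianSpace Y] :
    ∃ S ⊆ Y, S.Finite ∧ ∀ F, IsClosed F → Disjoint S F →
      topologicalKrullDim ↥(Y ∩ F) + 1 ≤ topologicalKrullDim Y := by
  have hfin : Finite (irreducibleComponents Y) := NoetherianSpace.finite_irreducibleComponents
  choose y hy using fun C : irreducibleComponents Y => C.2.1.nonempty
  refine ⟨range fun C => (y C : X), range_subset_iff.2 fun C => (y C).2, finite_range _,
    fun F hF hSF => ?_⟩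
  refine topologicalKrullDim_add_one_le_of_isInducing
    (IsEmbedding.inclusion inter_subset_left).isInducing fun C hC hsub => ?_
  have hclosure : closure (range (inclusion inter_subset_left : ↥(Y ∩ F) → Y)) ⊆ (↑) ⁻¹' F :=
    closure_minimal (range_subset_iff.2 fun z => z.2.2) (hF.preimage continuous_subtype_val)
  exact disjoint_left.1 hSF (mem_range_self ⟨C, hC⟩) (hclosure (hsub (hy ⟨C, hC⟩)))

theorem isEmpty_of_topologicalKrullDim_lt_zero (h : topologicalKrullDim X < 0) : IsEmpty X := by
  rw [topologicalKrullDim, ← not_le, Order.krullDim_nonneg_iff] at h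
  exact ⟨fun x => h ⟨⟨closure {x}, isIrreducible_singleton.closure, isClosed_closure⟩⟩⟩

end KrullDim

theorem exists_forall_add_mul_notMem_of_pairwise_isCoprime {R : Type*} [CommRing R] {ι : Type*}
    [Finite ι] {I : ι → Ideal R} (hI : Pairwise (IsCoprime on I)) {s : R} (hs : ∀ i, s ∉ I i)
    (a : R) : ∃ b, ∀ i, a + s * b ∉ I i := by
  have hlocal : ∀ i, ∃ c, a + s * c ∉ I i := fun i => by
    by_cases ha : a ∈ I i
    · exact ⟨1, by simpa [(I i).add_mem_iff_right ha] using hs i⟩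
    · exact ⟨0, by simpa using ha⟩
  choose c hc using hlocal
  obtain ⟨b, hb⟩ := Ideal.exists_forall_sub_mem_ideal hI c
  refine ⟨b, fun i hmem => hc i ?_⟩
  have heq : a + s * c i = a + s * b - s * (b - c i) := by ring
  rw [heq]
  exact sub_mem hmem ((I i).mul_mem_left s (hb i))

section Specm

variable {R : Type*} [CommRing R]

/-- The maximal spectrum `Specm R` as a subspace of `Spec R`. It is not Mathlib's `MaximalSpectrum`,
which is a structure of its own rather than a subtype of `PrimeSpectrum R`. -/
abbrev Specm (R : Type*) [CommRing R] := {p : PrimeSpectrum R // p.asIdeal.IsMaximal}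

theorem isClosed_setOf_mem_asIdeal (a : R) : IsClosed {m : Specm R | a ∈ m.1.asIdeal} := by
  have heq : {m : Specm R | a ∈ m.1.asIdeal} = Subtype.val ⁻¹' PrimeSpectrum.zeroLocus {a} := by
    ext m
    simp
  exact heq ▸ (PrimeSpectrum.isClosed_zeroLocus {a}).preimage continuous_subtype_val

theorem pairwise_isCoprime_specm :
    Pairwise (IsCoprime on fun m : Specm R => m.1.asIdeal) := fun m n hmn =>
  Ideal.isCoprime_iff_sup_eq.2 <| m.2.coprime_of_ne n.2 fun h =>
    hmn (Subtype.ext (PrimeSpectrum.ext h))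

variable [NoetherianSpace (Specm R)] {ι : Type*} [Finite ι] {s : R}

theorem exists_forall_topologicalKrullDim_inter_add_one_le {Y : ι → Set (Specm R)}
    (hs : ∀ i, ∀ m ∈ Y i, s ∉ m.1.asIdeal) (a : R) :
    ∃ b, ∀ i, topologicalKrullDim ↥(Y i ∩ {m | a + s * b ∈ m.1.asIdeal}) + 1 ≤
      topologicalKrullDim (Y i) := by
  choose S hSY hSfin hSdim using fun i =>
    exists_finite_forall_isClosed_topologicalKrullDim_inter_add_one_le (Y i)
  have hfin : Finite ↥(⋃ i, S i) := finite_iUnion hSfin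
  obtain ⟨b, hb⟩ := exists_forall_add_mul_notMem_of_pairwise_isCoprime
    (I := fun m : ↥(⋃ i, S i) => m.1.1.asIdeal)
    (pairwise_isCoprime_specm.comp_of_injective Subtype.val_injective)
    (fun ⟨m, hm⟩ => by
      obtain ⟨i, hi⟩ := mem_iUnion.1 hm
      exact hs i m (hSY i hi)) a
  exact ⟨b, fun i => hSdim i _ (isClosed_setOf_mem_asIdeal _) <| disjoint_left.2 fun m hm =>
    hb ⟨m, mem_iUnion.2 ⟨i, hm⟩⟩⟩

theorem exists_forall_exists_add_mul_notMem_of_topologicalKrullDim_lt {n : ℕ}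
    {Y : ι → Set (Specm R)} (hs : ∀ i, ∀ m ∈ Y i, s ∉ m.1.asIdeal)
    (hdim : ∀ i, topologicalKrullDim (Y i) < n) (a : Fin n → R) :
    ∃ b : Fin n → R, ∀ i, ∀ m ∈ Y i, ∃ j, a j + s * b j ∉ m.1.asIdeal := by
  induction n generalizing Y with
  | zero =>
    exact ⟨0, fun i m hm => (isEmpty_of_topologicalKrullDim_lt_zero (hdim i)).elim ⟨m, hm⟩⟩
  | succ n ih =>
    obtain ⟨b₀, hb₀⟩ := exists_forall_topologicalKrullDim_inter_add_one_le hs (a 0)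
    have hdim' (i) : topologicalKrullDim ↥(Y i ∩ {m | a 0 + s * b₀ ∈ m.1.asIdeal}) < n :=
      lt_of_add_lt_add_right ((hb₀ i).trans_lt (by exact_mod_cast hdim i))
    obtain ⟨b, hb⟩ := ih (fun i m hm => hs i m hm.1) hdim' (vecTail a)
    refine ⟨vecCons b₀ b, fun i m hm => ?_⟩
    by_cases hm₀ : a 0 + s * b₀ ∈ m.1.asIdeal
    · obtain ⟨j, hj⟩ := hb i m ⟨hm, hm₀⟩
      exact ⟨j.succ, hj⟩
    · exact ⟨0, hm₀⟩

end Specm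

/-- Bass' stable range condition: every unimodular row `(s, a₁, …, aₙ)` of length `n + 1` can be
shortened to a unimodular row `(a₁ + s b₁, …, aₙ + s bₙ)`. The entry to be removed is the first one,
so that it can be split off with `Matrix.vecCons`. -/
def HasStableRange (R : Type*) [CommRing R] (n : ℕ) : Prop :=
  ∀ (s : R) (a : Fin n → R), Ideal.span (range (vecCons s a)) = ⊤ →
    ∃ b : Fin n → R, Ideal.span (range (a + s • b)) = ⊤

theorem hasStableRange_of_topologicalKrullDim_lt {R : Type*} [CommRing R]
    [NoetherianSpace (Specm R)] {ι : Type*} [Finite ι]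
    {X : ι → Set (Specm R)} (hX : ⋃ i, X i = univ) {n : ℕ}
    (hdim : ∀ i, topologicalKrullDim (X i) < n) : HasStableRange R n := by
  intro s a ha
  have hdim' (i) : topologicalKrullDim ↥(X i ∩ {m | s ∉ m.1.asIdeal}) < n :=
    (IsEmbedding.inclusion inter_subset_left).isInducing.topologicalKrullDim_le.trans_lt (hdim i)
  obtain ⟨b, hb⟩ := exists_forall_exists_add_mul_notMem_of_topologicalKrullDim_lt
    (fun i m hm => hm.2) hdim' a
  refine ⟨b, by_contra fun hne => ?_⟩
  obtain ⟨m, hm, hle⟩ := Ideal.exists_le_maximal _ hne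
  have hmem (j) : a j + s * b j ∈ m := hle (Ideal.subset_span (mem_range_self j))
  by_cases hsm : s ∈ m
  · refine hm.ne_top (top_le_iff.1 (ha ▸ Ideal.span_le.2 (range_subset_iff.2 (Fin.cases hsm ?_))))
    exact fun j => (m.add_mem_iff_left (m.mul_mem_right (b j) hsm)).1 (hmem j)
  · let M : Specm R := ⟨⟨m, hm.isPrime⟩, hm⟩
    obtain ⟨i, hi⟩ := iUnion_eq_univ_iff.1 hX M
    obtain ⟨j, hj⟩ := hb i M ⟨hi, hsm⟩
    exact hj (hmem j)

section ElementaryEquiv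

variable {R : Type*} [CommRing R]

/-- Two rows are elementarily equivalent if they lie in the same orbit of `E_r(R)` acting by right
multiplication. -/
def ElementaryEquiv {r : ℕ} (v w : Fin r → R) : Prop :=
  ∃ ε ∈ elementarySubgroup r R, v ᵥ* (ε : Matrix (Fin r) (Fin r) R) = w

namespace ElementaryEquiv

variable {r n : ℕ}

theorem refl (v : Fin r → R) : ElementaryEquiv v v :=
  ⟨1, one_mem _, by simp⟩

theorem trans {u v w : Fin r → R} (huv : ElementaryEquiv u v) (hvw : ElementaryEquiv v w) :
    ElementaryEquiv u w := by
  obtain ⟨ε, hε, rfl⟩ := huv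
  obtain ⟨η, hη, rfl⟩ := hvw
  exact ⟨ε * η, mul_mem hε hη, by simp [vecMul_vecMul]⟩

theorem add_single (v : Fin r → R) {i j : Fin r} (hij : i ≠ j) (c : R) :
    ElementaryEquiv v (v + Pi.single j (v i * c)) := by
  refine ⟨SpecialLinearGroup.transvection hij c,
    Subgroup.subset_closure ⟨i, j, c, hij, rfl⟩, ?_⟩
  rw [SpecialLinearGroup.transvection_coe, vecMul_add, vecMul_one]
  ext l
  simp [vecMul, dotProduct, single_apply, Pi.single_apply, ite_and, eq_comm]

theorem vecCons_add_smul (x : R) (u b : Fin n → R) :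
    ElementaryEquiv (vecCons x u) (vecCons x (u + x • b)) := by
  induction b using Pi.single_induction generalizing u with
  | zero => simpa using refl (vecCons x u)
  | add b c hb hc => simpa [add_assoc] using (hb u).trans (hc (u + x • b))
  | single j c =>
    convert add_single (vecCons x u) (Fin.succ_ne_zero j).symm c using 1
    ext l
    cases l using Fin.cases <;> simp [Pi.single_apply]

theorem vecCons_add_dotProduct (x : R) (u c : Fin n → R) :
    ElementaryEquiv (vecCons x u) (vecCons (x + u ⬝ᵥ c) u) := by
  induction c using Pi.single_induction generalizing x with
  | zero => simpa using refl (vecCons x u)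
  | add b c hb hc => simpa [add_assoc] using (hb x).trans (hc (x + u ⬝ᵥ b))
  | single j c =>
    convert add_single (vecCons x u) (Fin.succ_ne_zero j) c using 1
    ext l
    cases l using Fin.cases <;> simp

end ElementaryEquiv

theorem HasStableRange.elementaryEquiv_single {n : ℕ} (h : HasStableRange R n)
    {a : Fin (n + 1) → R} (ha : Ideal.span (range a) = ⊤) :
    ElementaryEquiv a (Pi.single 0 1) := by
  obtain ⟨s, u, rfl⟩ : ∃ s u, vecCons s u = a := ⟨vecHead a, vecTail a, cons_head_tail a⟩
  obtain ⟨b, hb⟩ := h s u ha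
  set u' := u + s • b
  obtain ⟨c, hc⟩ := Ideal.mem_span_range_iff_exists_fun.1 ((Ideal.eq_top_iff_one _).1 hb)
  have hfirst : s + u' ⬝ᵥ ((1 - s) • c) = 1 := by
    rw [dotProduct_smul, dotProduct_comm, dotProduct, hc, smul_eq_mul]
    ring
  have hsingle : vecCons 1 (u' + (1 : R) • -u') = Pi.single (0 : Fin (n + 1)) 1 := by
    ext l
    cases l using Fin.cases <;> simp
  have hone := ElementaryEquiv.vecCons_add_dotProduct s u' ((1 - s) • c)
  have hclear := ElementaryEquiv.vecCons_add_smul 1 u' (-u')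
  rw [hfirst] at hone
  rw [hsingle] at hclear
  exact ((ElementaryEquiv.vecCons_add_smul s u b).trans hone).trans hclear

end ElementaryEquiv

/-- If the maximal spectrum of `R` is a noetherian topological space covered by finitely many
subspaces of topological Krull dimension at most `d`, then for `r ≥ d + 2` the elementary group
`E_r(R)` acts transitively on unimodular rows of length `r`: every unimodular row can be moved
to `(1, 0, …, 0)` by an elementary matrix. -/
theorem stmt17 (R : Type*) [CommRing R] (d N : ℕ)
    (hnoeth : TopologicalSpace.NoetherianSpace {p : PrimeSpectrum R // p.asIdeal.IsMaximal})
    (X : Fin N → Set {p : PrimeSpectrum R // p.asIdeal.IsMaximal})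
    (hcover : (⋃ i, X i) = Set.univ)
    (hdim : ∀ i, topologicalKrullDim ↥(X i) ≤ ((d : ℕ∞) : WithBot ℕ∞))
    (r : ℕ) (hr : d + 2 ≤ r)
    (a : Fin r → R) (ha : Ideal.span (Set.range a) = ⊤) :
    ∃ ε ∈ elementarySubgroup r R, ∀ i : Fin r,
      Matrix.vecMul a (ε : Matrix (Fin r) (Fin r) R) i = if (i : ℕ) = 0 then 1 else 0 := by
  obtain ⟨n, rfl⟩ : ∃ n, r = n + 1 := ⟨r - 1, by omega⟩
  have hdn : d < n := by omega
  have hstable : HasStableRange R n := hasStableRange_of_topologicalKrullDim_lt hcover fun i =>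
    (hdim i).trans_lt (by exact_mod_cast hdn)
  obtain ⟨ε, hε, h⟩ := hstable.elementaryEquiv_single ha
  exact ⟨ε, hε, fun i => by simp only [h, Pi.single_apply, Fin.ext_iff, Fin.val_zero]⟩
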